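/- arXiv:1706.03631 — 2 statements merged into one kernel-verified Lean document; each statement's English description precedes it below -/
import Mathlib

section
/- Let n ≥ 2. There exists a nonzero polynomial P in 3(n−1)+1 complex variables such that for every Hankel tensor H of order 3 and dimension n whose parameter vector h satisfies P(h) ≠ 0, one has brank(H) = brank_S(H) = rank(H) = rank_S(H) = rank_V(H) = ⌊(3n−1)/2⌋. -/
open scoped BigOperators
open MvPolynomial

noncomputable section

/-- An order-`m`, dimension-`n` complex tensor. -/
abbrev Tensor (m n : ℕ) := (Fin m → Fin n) → ℂ

/-- Tensors expressible as a sum of `r` rank-one tensors. -/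
def cpSet (m n r : ℕ) : Set (Tensor m n) :=
  {T | ∃ u : Fin r → Fin m → Fin n → ℂ, ∀ i, T i = ∑ k, ∏ j, u k j (i j)}

/-- Tensors expressible as a sum of `r` symmetric rank-one tensors. -/
def symSet (m n r : ℕ) : Set (Tensor m n) :=
  {T | ∃ v : Fin r → Fin n → ℂ, ∀ i, T i = ∑ k, ∏ j, v k (i j)}

/-- The Vandermonde vector `v(a,b) ∈ ℂ^n`, `v(a,b)_i = a^(n-1-i) * b^i`. -/
def vand (n : ℕ) (a b : ℂ) : Fin n → ℂ := fun i => a ^ (n - 1 - (i : ℕ)) * b ^ (i : ℕ)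

/-- Tensors expressible as a sum of `r` Vandermonde rank-one tensors. -/
def vandSet (m n r : ℕ) : Set (Tensor m n) :=
  {T | ∃ ab : Fin r → ℂ × ℂ, ∀ i, T i = ∑ k, ∏ j, vand n (ab k).1 (ab k).2 (i j)}

/-- The cp rank of a tensor. -/
def cpRank {m n : ℕ} (T : Tensor m n) : ℕ := sInf {r | T ∈ cpSet m n r}

/-- The symmetric rank of a tensor. -/
def symRank {m n : ℕ} (T : Tensor m n) : ℕ := sInf {r | T ∈ symSet m n r}

/-- The Vandermonde rank of a tensor. -/
def vandRank {m n : ℕ} (T : Tensor m n) : ℕ := sInf {r | T ∈ vandSet m n r}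

/-- The border rank of a tensor (closure in the product topology). -/
def brank {m n : ℕ} (T : Tensor m n) : ℕ := sInf {r | T ∈ closure (cpSet m n r)}

/-- The symmetric border rank of a tensor. -/
def bSymRank {m n : ℕ} (T : Tensor m n) : ℕ := sInf {r | T ∈ closure (symSet m n r)}

/-- The border Vandermonde rank of a tensor. -/
def bVandRank {m n : ℕ} (T : Tensor m n) : ℕ := sInf {r | T ∈ closure (vandSet m n r)}

/-- `T` is the Hankel tensor with parameter vector `h ∈ ℂ^{(n-1)m+1}`. -/
def IsHankel {m n : ℕ} (T : Tensor m n) (h : Fin ((n - 1) * m + 1) → ℂ) : Prop :=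
  ∀ i : Fin m → Fin n, T i = h ⟨∑ j, (i j : ℕ), by
    have h1 : ∑ j, (i j : ℕ) ≤ ∑ _j : Fin m, (n - 1) :=
      Finset.sum_le_sum fun j _ => Nat.le_pred_of_lt (i j).isLt
    simp only [Finset.sum_const, Finset.card_univ, Fintype.card_fin, smul_eq_mul] at h1
    exact Nat.lt_succ_of_le (h1.trans (le_of_eq (Nat.mul_comm m (n - 1))))⟩

/-- The `(d-r+1) × (r+1)` Hankel (catalecticant) matrix `C_{d-r,r}(h)` of `h ∈ ℂ^{d+1}`. -/
def hMat (d r : ℕ) (h : Fin (d + 1) → ℂ) : Matrix (Fin (d - r + 1)) (Fin (r + 1)) ℂ :=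
  Matrix.of fun i j => if hij : (i : ℕ) + (j : ℕ) < d + 1 then h ⟨(i : ℕ) + (j : ℕ), hij⟩ else 0

/-- The binary form `f(x,y) = f_0 x^r + f_1 x^(r-1) y + ⋯ + f_r y^r`. -/
def binForm (r : ℕ) (f : Fin (r + 1) → ℂ) : MvPolynomial (Fin 2) ℂ :=
  ∑ j : Fin (r + 1), C (f j) * X 0 ^ (r - (j : ℕ)) * X 1 ^ (j : ℕ)

/-- The binary form `h(x,y) = ∑_j binom(d,j) h_j x^j y^(d-j)` associated with `h ∈ ℂ^{d+1}`. -/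
def assocForm (d : ℕ) (h : Fin (d + 1) → ℂ) : MvPolynomial (Fin 2) ℂ :=
  ∑ j : Fin (d + 1), C ((d.choose (j : ℕ) : ℂ) * h j) * X 0 ^ (j : ℕ) * X 1 ^ (d - (j : ℕ))

/-- Parameter vectors of binary forms of Waring rank at most `r`. -/
def waringSet (d r : ℕ) : Set (Fin (d + 1) → ℂ) :=
  {h | ∃ ab : Fin r → ℂ × ℂ,
    assocForm d h = ∑ i, (C (ab i).1 * X 0 + C (ab i).2 * X 1) ^ d}

/-- The Waring rank of the binary form associated with `h`. -/
def waringRank (d : ℕ) (h : Fin (d + 1) → ℂ) : ℕ := sInf {r | h ∈ waringSet d r}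

/-- The border Waring rank of the binary form associated with `h`. -/
def bWaringRank (d : ℕ) (h : Fin (d + 1) → ℂ) : ℕ := sInf {r | h ∈ closure (waringSet d r)}

/-!
Write `R = ⌊(3n - 1) / 2⌋`, so that a Hankel tensor of order `3` has at most `2R` parameters.

*Upper bound.* By Sylvester's theorem a generic sequence of length `2R` has the form
`s i = ∑ k, c k * t k ^ i`: the nodes `t k` are the eigenvalues of the shift `H₀⁻¹ * H₁` defined by
two consecutive Hankel matrices, and generically these are distinct. Extracting a root of `c k`
turns each summand into a Vandermonde rank-one tensor.

*Lower bound.* Cutting out the slices `0`, `p = ⌊(n - 1) / 2⌋` and `n - 1` leaves a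
`3 × n × n` tensor. Its Koszul flattening has rank at most `2r` when the border rank is at most `r`,
since a rank-one tensor contributes a skew `3 × 3` matrix, of rank `2`. At a sum of `R` powers of
distinct nodes the flattening has rank `2R`: it factors as `M * J * Mᵀ` with `J` invertible of size
`2R`, and `M` is injective by a Vandermonde argument because the ranges of exponents `0, …, n - 1`
shifted by `0`, `p` and `n - 1` overlap enough. As a lower bound on a rank is a Zariski open
condition, the flattening of a generic Hankel tensor has rank at least `2R`.
-/

/-! ### Generic properties -/

section Generic

variable {σ τ K : Type*}

/-- A property of points of affine space is generic if it holds wherever some nonzero polynomial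
does not vanish. The coordinates may be infinite in number; only finitely many of them matter. -/
def IsGeneric [CommSemiring K] (Q : (σ → K) → Prop) : Prop :=
  ∃ P : MvPolynomial σ K, P ≠ 0 ∧ ∀ x, eval x P ≠ 0 → Q x

lemma isGeneric_eval_ne_zero [CommSemiring K] {P : MvPolynomial σ K} {x₀ : σ → K}
    (h : eval x₀ P ≠ 0) : IsGeneric fun x => eval x P ≠ 0 :=
  ⟨P, fun hP => h (by rw [hP, map_zero]), fun _ => id⟩

lemma IsGeneric.mono [CommSemiring K] {Q Q' : (σ → K) → Prop} (hQ : IsGeneric Q)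
    (h : ∀ x, Q x → Q' x) : IsGeneric Q' :=
  let ⟨P, hP, hPQ⟩ := hQ
  ⟨P, hP, fun x hx => h x (hPQ x hx)⟩

lemma IsGeneric.and [CommRing K] [IsDomain K] {Q Q' : (σ → K) → Prop} (hQ : IsGeneric Q)
    (hQ' : IsGeneric Q') : IsGeneric fun x => Q x ∧ Q' x := by
  obtain ⟨P, hP, hPQ⟩ := hQ
  obtain ⟨P', hP', hPQ'⟩ := hQ'
  refine ⟨P * P', mul_ne_zero hP hP', fun x hx => ?_⟩
  rw [map_mul] at hx
  exact ⟨hPQ x (left_ne_zero_of_mul hx), hPQ' x (right_ne_zero_of_mul hx)⟩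

lemma IsGeneric.exists_comp_eq [CommRing K] [IsDomain K] [Infinite K] {Q : (τ → K) → Prop}
    (hQ : IsGeneric Q) (f : σ ↪ τ) : IsGeneric fun x : σ → K => ∃ y, y ∘ f = x ∧ Q y := by
  obtain ⟨P, hP, hPQ⟩ := hQ
  -- Freeze the coordinates outside the range of `f` at those of a point where `P` does not vanish.
  obtain ⟨z, hz⟩ : ∃ z, eval z P ≠ 0 := by
    contrapose! hP
    exact MvPolynomial.funext fun z => (hP z).trans (map_zero _).symm
  have heval (x : σ → K) : eval x (bind₁ (Function.extend f X (C ∘ z)) P)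
      = eval (Function.extend f x z) P := by
    have hy : (fun i => eval x (Function.extend f X (C ∘ z) i)) = Function.extend f x z := by
      funext i
      rw [Function.apply_extend (eval x)]
      congr 1 <;> funext <;> simp
    rw [← hy]
    exact eval₂Hom_bind₁ ..
  have hz' : Function.extend f (z ∘ f) z = z := by
    funext i
    by_cases hi : ∃ a, f a = i
    · obtain ⟨a, rfl⟩ := hi
      exact f.injective.extend_apply _ _ a
    · exact Function.extend_apply' _ _ i hi
  refine ⟨bind₁ (Function.extend f X (C ∘ z)) P, fun h => hz ?_, fun x hx =>
    ⟨Function.extend f x z, Function.extend_comp f.injective x z, hPQ _ ?_⟩⟩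
  · rw [← hz', ← heval, h, map_zero]
  · rwa [← heval]

lemma resultant_derivative_ne_zero_iff [Field K] [CharZero K] {f : Polynomial K} (hf : f ≠ 0) :
    f.resultant f.derivative f.natDegree (f.natDegree - 1) ≠ 0 ↔ f.Separable := by
  rw [← Polynomial.natDegree_derivative f, Ne, Polynomial.resultant_eq_zero_iff,
    Polynomial.separable_def]
  simp only [hf, ne_eq, not_false_eq_true, true_or, true_and, not_not]

lemma isGeneric_separable_map [Field K] [CharZero K] {f : Polynomial (MvPolynomial σ K)} {d : ℕ}
    (hf : f.natDegree ≤ d) {x₀ : σ → K} (hcoeff : eval x₀ (f.coeff d) ≠ 0)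
    (hsep : (f.map (eval x₀)).Separable) : IsGeneric fun x => (f.map (eval x)).Separable := by
  have hres (x : σ → K) (hx : eval x (f.coeff d) ≠ 0) :
      eval x (f.resultant f.derivative d (d - 1)) ≠ 0 ↔ (f.map (eval x)).Separable := by
    rw [← Polynomial.coeff_map] at hx
    have hdeg : (f.map (eval x)).natDegree = d :=
      Polynomial.natDegree_eq_of_le_of_coeff_ne_zero (Polynomial.natDegree_map_le.trans hf) hx
    rw [← resultant_derivative_ne_zero_iff fun h => hx (by rw [h, Polynomial.coeff_zero]), hdeg,
      Polynomial.derivative_map, Polynomial.resultant_map_map]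
  exact ((isGeneric_eval_ne_zero hcoeff).and
    (isGeneric_eval_ne_zero ((hres x₀ hcoeff).2 hsep))).mono fun x ⟨hx, hx'⟩ => (hres x hx).1 hx'

end Generic

/-! ### Rank and minors -/

section Rank

variable {m n K : Type*} [Field K]

lemma exists_mul_eq_one_of_mulVec_injective [Fintype m] [Fintype n] [DecidableEq n]
    {M : Matrix m n K} (hM : Function.Injective M.mulVec) : ∃ E : Matrix n m K, E * M = 1 := by
  classical
  obtain ⟨g, hg⟩ := LinearMap.exists_leftInverse_of_injective (Matrix.toLin' M)
    (LinearMap.ker_eq_bot.2 hM)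
  refine ⟨LinearMap.toMatrix' g, ?_⟩
  rw [← LinearMap.toMatrix'_toLin' M, ← LinearMap.toMatrix'_comp, hg, LinearMap.toMatrix'_id]

lemma rank_le_rank_mul_mul_transpose [Fintype m] [Fintype n] {M : Matrix m n K}
    (hM : Function.Injective M.mulVec) (J : Matrix n n K) :
    J.rank ≤ (M * J * M.transpose).rank := by
  classical
  obtain ⟨E, hE⟩ := exists_mul_eq_one_of_mulVec_injective hM
  calc J.rank = (E * (M * J * M.transpose) * E.transpose).rank := by
        rw [← Matrix.mul_assoc, ← Matrix.mul_assoc, hE, Matrix.one_mul, Matrix.mul_assoc,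
          ← Matrix.transpose_mul, hE, Matrix.transpose_one, Matrix.mul_one]
    _ ≤ (M * J * M.transpose).rank :=
        (Matrix.rank_mul_le_left _ _).trans (Matrix.rank_mul_le_right _ _)

lemma matrix_rank_add_le [Finite m] [Fintype n] (M N : Matrix m n K) :
    (M + N).rank ≤ M.rank + N.rank := by
  rw [Matrix.rank, Matrix.mulVecLin_add]
  exact (Submodule.finrank_mono (LinearMap.range_add_le _ _)).trans
    (Submodule.finrank_add_le_finrank_add_finrank _ _)

lemma le_rank_iff_exists_det_ne_zero [Fintype m] [Fintype n] {M : Matrix m n K} {r : ℕ} :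
    r ≤ M.rank ↔ ∃ (E : Matrix (Fin r) m K) (F : Matrix n (Fin r) K), (E * M * F).det ≠ 0 := by
  constructor
  · intro hr
    obtain ⟨w, hw⟩ := exists_linearIndependent_of_le_finrank hr
    choose v hv using fun k => (w k).2
    have hcol : (M * (Matrix.of v).transpose).col = fun k => (w k : m → K) := by
      funext k
      rw [← hv k]
      rfl
    obtain ⟨E, hE⟩ := exists_mul_eq_one_of_mulVec_injective (M := M * (Matrix.of v).transpose)
      (Matrix.mulVec_injective_iff.2 (hcol ▸ hw.map' _ (Submodule.ker_subtype _)))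
    exact ⟨E, (Matrix.of v).transpose, by simp [Matrix.mul_assoc, hE]⟩
  · rintro ⟨E, F, hdet⟩
    calc r = (E * M * F).rank := by rw [Matrix.rank_of_det_ne_zero hdet, Fintype.card_fin]
      _ ≤ (E * M).rank := Matrix.rank_mul_le_left _ _
      _ ≤ M.rank := Matrix.rank_mul_le_right _ _

lemma isGeneric_le_rank_map [Finite m] [Fintype n] {σ : Type*} {M : Matrix m n (MvPolynomial σ K)}
    {r : ℕ} {x₀ : σ → K} (h : r ≤ (M.map (eval x₀)).rank) :
    IsGeneric fun x => r ≤ (M.map (eval x)).rank := by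
  cases nonempty_fintype m
  obtain ⟨E, F, hdet⟩ := le_rank_iff_exists_det_ne_zero.1 h
  let E' : Matrix (Fin r) m (MvPolynomial σ K) := E.map C
  let F' : Matrix n (Fin r) (MvPolynomial σ K) := F.map C
  have heval (x : σ → K) : eval x (E' * M * F').det = (E * M.map (eval x) * F).det := by
    rw [RingHom.map_det, RingHom.mapMatrix_apply, Matrix.map_mul, Matrix.map_mul]
    simp [E', F', Function.comp_def]
  rw [← heval] at hdet
  exact (isGeneric_eval_ne_zero hdet).mono fun x hx =>
    le_rank_iff_exists_det_ne_zero.2 ⟨E, F, by rwa [← heval]⟩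

lemma isClosed_setOf_rank_le [Finite m] [Fintype n] [TopologicalSpace K] [IsTopologicalRing K]
    [T1Space K] (r : ℕ) : IsClosed {M : Matrix m n K | M.rank ≤ r} := by
  cases nonempty_fintype m
  have hset : {M : Matrix m n K | M.rank ≤ r} =
      ⋂ (E : Matrix (Fin (r + 1)) m K) (F : Matrix n (Fin (r + 1)) K),
        {M | (E * M * F).det = 0} := by
    ext M
    simpa only [Set.mem_iInter, Set.mem_ofPred_eq, not_le, Nat.lt_succ_iff, not_exists, not_not]
      using (le_rank_iff_exists_det_ne_zero (M := M) (r := r + 1)).not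
  rw [hset]
  exact isClosed_iInter fun E => isClosed_iInter fun F =>
    isClosed_singleton.preimage (by fun_prop)

end Rank

/-! ### Sylvester's theorem on generic finite sequences -/

section Nodal

variable {K : Type*} [Field K]

lemma pow_eq_sum_smul_lagrangeBasis {A ι : Type*} [Ring A] [Algebra K A] [Fintype ι]
    [DecidableEq ι] {t : ι → K} (ht : Function.Injective t) {a : A}
    (ha : Polynomial.aeval a (Lagrange.nodal Finset.univ t) = 0) (i : ℕ) :
    a ^ i = ∑ k, t k ^ i • Polynomial.aeval a (Lagrange.basis Finset.univ t k) := by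
  have hmod : (Polynomial.X ^ i) %ₘ Lagrange.nodal Finset.univ t
      = Lagrange.interpolate Finset.univ t fun k => t k ^ i := by
    refine Lagrange.eq_interpolate_of_eval_eq _ ht.injOn ?_ fun k _ => ?_
    · rw [← Lagrange.degree_nodal (v := t)]
      exact Polynomial.degree_modByMonic_lt _ Lagrange.nodal_monic
    · rw [← Polynomial.coe_aeval_eq_eval, Polynomial.aeval_modByMonic_eq_self_of_root]
      · simp
      · simp [Lagrange.eval_nodal_at_node]
  calc a ^ i = Polynomial.aeval a (Polynomial.X ^ i %ₘ Lagrange.nodal Finset.univ t) := by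
        rw [Polynomial.aeval_modByMonic_eq_self_of_root ha, Polynomial.aeval_X_pow]
    _ = _ := by
        rw [hmod, Lagrange.interpolate_apply, map_sum]
        exact Finset.sum_congr rfl fun k _ => by rw [← Polynomial.smul_eq_C_mul, map_smul]

lemma exists_eq_nodal_of_separable [IsAlgClosed K] {f : Polynomial K} {d : ℕ} (hf : f.Monic)
    (hdeg : f.natDegree = d) (hsep : f.Separable) :
    ∃ t : Fin d → K, Function.Injective t ∧ f = Lagrange.nodal Finset.univ t := by
  classical
  have hcard : f.roots.toFinset.card = d := by
    rw [Multiset.toFinset_card_of_nodup (Polynomial.nodup_roots hsep),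
      ← (IsAlgClosed.splits f).natDegree_eq_card_roots, hdeg]
  let e := Finset.equivFinOfCardEq hcard
  refine ⟨fun k => e.symm k, Subtype.val_injective.comp e.symm.injective, ?_⟩
  rw [Lagrange.nodal, Equiv.prod_comp e.symm (fun x => Polynomial.X - Polynomial.C (x : K)),
    Finset.prod_coe_sort f.roots.toFinset fun x => Polynomial.X - Polynomial.C x]
  conv_lhs => rw [(IsAlgClosed.splits f).eq_prod_roots_of_monic hf]
  rw [Finset.prod, Multiset.toFinset_val, (Polynomial.nodup_roots hsep).dedup]

end Nodal

section Hankel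

variable {A B K : Type*} [CommRing A] [CommRing B] [Field K] {R : ℕ} {s : ℕ → K}

/-- The `R × R` Hankel matrix of a sequence. -/
def hankelMatrix {A : Type*} (R : ℕ) (s : ℕ → A) : Matrix (Fin R) (Fin R) A :=
  Matrix.of fun i j => s (i + j)

/-- The determinant of the Hankel pencil of a sequence `s`, that is of `X • H₀ - H₁` with `H₀` and
`H₁` the Hankel matrices of `s` and of its shift. If `s i = ∑ k, c k * t k ^ i` with `R` distinct
nodes `t k` and nonzero weights `c k`, its roots are the nodes. -/
def hankelPencilDet (R : ℕ) (s : ℕ → A) : Polynomial A :=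
  ((Polynomial.X : Polynomial A) • (hankelMatrix R s).map Polynomial.C
    + (-hankelMatrix R fun i => s (i + 1)).map Polynomial.C).det

/-- The matrix `H₀⁻¹ * H₁`, with `H₀` and `H₁` the Hankel matrices of `s` and of its shift. It is
the companion matrix of the recurrence satisfied by `s`, and is meaningful only if `H₀` is
invertible. -/
def hankelShift (R : ℕ) (s : ℕ → K) : Matrix (Fin R) (Fin R) K :=
  (hankelMatrix R s)⁻¹ * hankelMatrix R fun i => s (i + 1)

lemma natDegree_hankelPencilDet_le (R : ℕ) (s : ℕ → A) : (hankelPencilDet R s).natDegree ≤ R :=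
  (Polynomial.natDegree_det_X_add_C_le _ _).trans_eq (Fintype.card_fin R)

lemma coeff_hankelPencilDet (R : ℕ) (s : ℕ → A) :
    (hankelPencilDet R s).coeff R = (hankelMatrix R s).det := by
  have h := Polynomial.coeff_det_X_add_C_card (hankelMatrix R s)
    (-hankelMatrix R fun i => s (i + 1))
  rwa [Fintype.card_fin] at h

lemma map_det_hankelMatrix (φ : A →+* B) (R : ℕ) (s : ℕ → A) :
    φ (hankelMatrix R s).det = (hankelMatrix R fun i => φ (s i)).det :=
  φ.map_det _

lemma map_hankelPencilDet (φ : A →+* B) (R : ℕ) (s : ℕ → A) :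
    (hankelPencilDet R s).map φ = hankelPencilDet R fun i => φ (s i) := by
  rw [hankelPencilDet, ← Polynomial.coe_mapRingHom, RingHom.map_det]
  congr 1
  ext i j : 2
  simp [hankelMatrix]

lemma hankelMatrix_sum_mul_pow (c t : Fin R → A) :
    hankelMatrix R (fun i => ∑ k, c k * t k ^ i)
      = (Matrix.vandermonde t).transpose * Matrix.diagonal c * Matrix.vandermonde t := by
  ext i j
  rw [hankelMatrix, Matrix.of_apply, Matrix.mul_apply]
  simp only [Matrix.mul_diagonal, Matrix.transpose_apply, Matrix.vandermonde_apply, pow_add]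
  exact Finset.sum_congr rfl fun k _ => by ring

lemma det_hankelMatrix_sum_pow (t : Fin R → A) :
    (hankelMatrix R fun i => ∑ k, t k ^ i).det = (Matrix.vandermonde t).det ^ 2 := by
  have h := congrArg Matrix.det (hankelMatrix_sum_mul_pow 1 t)
  simpa [sq] using h

lemma hankelPencilDet_sum_pow (t : Fin R → A) :
    hankelPencilDet R (fun i => ∑ k, t k ^ i)
      = Polynomial.C ((Matrix.vandermonde t).det ^ 2) * Lagrange.nodal Finset.univ t := by
  have hfactor : (Polynomial.X : Polynomial A) •
        (hankelMatrix R fun i => ∑ k, t k ^ i).map Polynomial.C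
      + (-hankelMatrix R fun i => ∑ k, t k ^ (i + 1)).map Polynomial.C
      = (Matrix.vandermonde t).transpose.map Polynomial.C
        * Matrix.diagonal (fun k => Polynomial.X - Polynomial.C (t k))
        * (Matrix.vandermonde t).map Polynomial.C := by
    refine Matrix.ext fun i j => ?_
    rw [Matrix.mul_apply]
    simp only [hankelMatrix, Matrix.add_apply, Matrix.smul_apply, Matrix.map_apply,
      Matrix.neg_apply, Matrix.of_apply, Matrix.mul_diagonal, Matrix.transpose_apply,
      Matrix.vandermonde_apply, smul_eq_mul, map_neg, map_sum, map_pow, Finset.mul_sum]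
    rw [← Finset.sum_neg_distrib, ← Finset.sum_add_distrib]
    exact Finset.sum_congr rfl fun k _ => by ring
  rw [hankelPencilDet, hfactor, Matrix.det_mul, Matrix.det_mul, Matrix.det_diagonal, sq,
    Polynomial.C_mul, Lagrange.nodal, mul_right_comm, Polynomial.C.map_det, RingHom.mapMatrix_apply,
    Matrix.transpose_map, Matrix.det_transpose]

lemma hankelMatrix_mul_hankelShift (h : (hankelMatrix R s).det ≠ 0) :
    hankelMatrix R s * hankelShift R s = hankelMatrix R fun i => s (i + 1) :=
  Matrix.mul_nonsing_inv_cancel_left _ _ h.isUnit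

lemma hankelPencilDet_eq_C_mul_charpoly (h : (hankelMatrix R s).det ≠ 0) :
    hankelPencilDet R s = Polynomial.C (hankelMatrix R s).det * (hankelShift R s).charpoly := by
  rw [Matrix.charpoly, RingHom.map_det, ← Matrix.det_mul, hankelPencilDet,
    ← hankelMatrix_mul_hankelShift h, Matrix.charmatrix]
  congr 1
  rw [mul_sub, ← map_mul, Matrix.scalar_apply, ← Matrix.smul_one_eq_diagonal, Matrix.mul_smul,
    Matrix.mul_one, RingHom.mapMatrix_apply, RingHom.mapMatrix_apply, sub_eq_add_neg,
    Matrix.map_neg _ (map_neg _)]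

lemma hankelMatrix_mul_hankelShift_pow_apply (h : (hankelMatrix (R + 1) s).det ≠ 0) {i : ℕ}
    (hi : i ≤ R + 1) (j : Fin (R + 1)) :
    (hankelMatrix (R + 1) s * hankelShift (R + 1) s ^ i) 0 j = s (i + j) := by
  induction i generalizing j with
  | zero => simp [hankelMatrix]
  | succ i ih =>
    calc (hankelMatrix (R + 1) s * hankelShift (R + 1) s ^ (i + 1)) 0 j
        = ∑ l, (hankelMatrix (R + 1) s * hankelShift (R + 1) s ^ i) 0 l
            * hankelShift (R + 1) s l j := by
          rw [pow_succ, ← Matrix.mul_assoc, Matrix.mul_apply]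
      _ = (hankelMatrix (R + 1) s * hankelShift (R + 1) s) ⟨i, hi⟩ j := by
          rw [Matrix.mul_apply]
          exact Finset.sum_congr rfl fun l _ => by rw [ih (by omega)]; rfl
      _ = s (i + 1 + j) := by
          rw [hankelMatrix_mul_hankelShift h, hankelMatrix, Matrix.of_apply, add_right_comm]

lemma hankelShift_apply_castSucc (h : (hankelMatrix (R + 1) s).det ≠ 0) (i : Fin (R + 1))
    (j : Fin R) : hankelShift (R + 1) s i j.castSucc = (1 : Matrix _ _ K) i j.succ := by
  rw [← Matrix.nonsing_inv_mul _ h.isUnit, hankelShift, Matrix.mul_apply, Matrix.mul_apply]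
  simp only [hankelMatrix, Matrix.of_apply, Fin.val_castSucc, Fin.val_succ, add_assoc]

lemma hankelShift_pow_apply_zero (h : (hankelMatrix (R + 1) s).det ≠ 0) (i j : Fin (R + 1)) :
    (hankelShift (R + 1) s ^ (j : ℕ)) i 0 = (1 : Matrix _ _ K) i j := by
  induction j using Fin.induction generalizing i with
  | zero => simp
  | succ j ih =>
    rw [Fin.val_castSucc] at ih
    rw [Fin.val_succ, pow_succ', Matrix.mul_apply]
    simp only [ih]
    rw [← Matrix.mul_apply, Matrix.mul_one, hankelShift_apply_castSucc h]

lemma hankelMatrix_mul_hankelShift_pow_apply_zero (h : (hankelMatrix (R + 1) s).det ≠ 0) {i : ℕ}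
    (hi : i < 2 * (R + 1)) :
    (hankelMatrix (R + 1) s * hankelShift (R + 1) s ^ i) 0 0 = s i := by
  -- With `H₀` the Hankel matrix and `S` its shift, split `i = a + j`: the first row of `H₀ * S ^ a`
  -- is known for `a ≤ R + 1`, and the first column of `S ^ j` is a basis vector for `j ≤ R`.
  obtain ⟨a, j, ha, rfl⟩ : ∃ (a : ℕ) (j : Fin (R + 1)), a ≤ R + 1 ∧ a + j = i := by
    rcases le_or_gt i (R + 1) with h | h
    · exact ⟨i, 0, h, by simp⟩
    · exact ⟨R + 1, ⟨i - (R + 1), by omega⟩, le_rfl, by simp; omega⟩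
  rw [pow_add, ← Matrix.mul_assoc, Matrix.mul_apply]
  simp only [hankelShift_pow_apply_zero h, ← Matrix.mul_apply, Matrix.mul_one]
  exact hankelMatrix_mul_hankelShift_pow_apply h ha j

lemma exists_sum_mul_pow_of_separable [IsAlgClosed K] (hdet : (hankelMatrix R s).det ≠ 0)
    (hsep : (hankelPencilDet R s).Separable) :
    ∃ c t : Fin R → K, ∀ i < 2 * R, s i = ∑ k, c k * t k ^ i := by
  rw [hankelPencilDet_eq_C_mul_charpoly hdet] at hsep
  obtain ⟨t, ht, hnodal⟩ := exists_eq_nodal_of_separable (Matrix.charpoly_monic _)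
    ((Matrix.charpoly_natDegree_eq_dim _).trans (Fintype.card_fin R)) hsep.of_mul_right
  have hroot : Polynomial.aeval (hankelShift R s) (Lagrange.nodal Finset.univ t) = 0 :=
    hnodal ▸ Matrix.aeval_self_charpoly _
  cases R with
  | zero => exact ⟨0, 0, by simp⟩
  | succ R =>
    refine ⟨fun k => (hankelMatrix (R + 1) s
      * Polynomial.aeval (hankelShift (R + 1) s) (Lagrange.basis Finset.univ t k)) 0 0, t,
      fun i hi => ?_⟩
    rw [← hankelMatrix_mul_hankelShift_pow_apply_zero hdet hi,
      pow_eq_sum_smul_lagrangeBasis ht hroot, Finset.mul_sum, Matrix.sum_apply]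
    exact Finset.sum_congr rfl fun k _ => by
      rw [Matrix.mul_smul, Matrix.smul_apply, smul_eq_mul, mul_comm]

lemma isGeneric_exists_sum_mul_pow [CharZero K] [IsAlgClosed K] (R : ℕ) :
    IsGeneric fun s : ℕ → K => ∃ c t : Fin R → K, ∀ i < 2 * R, s i = ∑ k, c k * t k ^ i := by
  let t : Fin R → K := fun k => (k : ℕ)
  have ht : Function.Injective t := Nat.cast_injective.comp Fin.val_injective
  have hV : (Matrix.vandermonde t).det ^ 2 ≠ 0 :=
    pow_ne_zero 2 (Matrix.det_vandermonde_ne_zero_iff.2 ht)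
  let f : Polynomial (MvPolynomial ℕ K) := hankelPencilDet R X
  have hcoeff (s : ℕ → K) : eval s (f.coeff R) = (hankelMatrix R s).det := by
    simp only [f, coeff_hankelPencilDet, map_det_hankelMatrix, eval_X]
  have hmap (s : ℕ → K) : f.map (eval s) = hankelPencilDet R s := by
    simp only [f, map_hankelPencilDet, eval_X]
  have hcoeff₀ : eval (fun i => ∑ k, t k ^ i) (f.coeff R) ≠ 0 := by
    rwa [hcoeff, det_hankelMatrix_sum_pow]
  have hsep₀ : (f.map (eval fun i => ∑ k, t k ^ i)).Separable := by
    rw [hmap, hankelPencilDet_sum_pow]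
    exact (Polynomial.separable_prod_X_sub_C_iff.2 ht).unit_mul (hV.isUnit.map Polynomial.C)
  refine ((isGeneric_eval_ne_zero hcoeff₀).and
    (isGeneric_separable_map (natDegree_hankelPencilDet_le R X) hcoeff₀ hsep₀)).mono ?_
  rintro s ⟨hs, hs'⟩
  exact exists_sum_mul_pow_of_separable (hcoeff s ▸ hs) (hmap s ▸ hs')

end Hankel

/-! ### Koszul flattenings -/

section Koszul

open Matrix

variable {α β ι A B K : Type*} [CommRing A] [CommRing B] [Field K]

/-- The matrix of the cross product with `a`, up to sign. -/
def crossMatrix (a : Fin 3 → A) : Matrix (Fin 3) (Fin 3) A :=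
  !![0, a 2, -a 1; -a 2, 0, a 0; a 1, -a 0, 0]

/-- The Koszul flattening of a triple of matrices `τ`: the `3 × 3` block matrix obtained from
`crossMatrix` by putting `τ c` in place of the coordinate `a c`. -/
def koszulMatrix (τ : Fin 3 → α → β → A) : Matrix (Fin 3 × α) (Fin 3 × β) A :=
  of fun x y => crossMatrix (fun c => τ c x.2 y.2) x.1 y.1

lemma map_koszulMatrix (φ : A →+* B) (τ : Fin 3 → α → β → A) :
    (koszulMatrix τ).map φ = koszulMatrix fun c i j => φ (τ c i j) := by
  ext ⟨x, i⟩ ⟨y, j⟩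
  fin_cases x <;> fin_cases y <;> simp [koszulMatrix, crossMatrix]

lemma continuous_crossMatrix [TopologicalSpace A] [IsTopologicalRing A] :
    Continuous (crossMatrix : (Fin 3 → A) → _) := by
  unfold crossMatrix
  fun_prop

lemma continuous_koszulMatrix [TopologicalSpace A] [IsTopologicalRing A] :
    Continuous (koszulMatrix : (Fin 3 → α → β → A) → _) :=
  continuous_matrix fun x y =>
    have h : Continuous fun (τ : Fin 3 → α → β → A) c => τ c x.2 y.2 := by fun_prop
    (continuous_crossMatrix.comp h).matrix_elem x.1 y.1

lemma koszulMatrix_sum [Fintype ι] (τ : ι → Fin 3 → α → β → A) :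
    (koszulMatrix fun c i j => ∑ k, τ k c i j) = ∑ k, koszulMatrix (τ k) := by
  ext ⟨x, i⟩ ⟨y, j⟩
  rw [Matrix.sum_apply]
  fin_cases x <;> fin_cases y <;> simp [koszulMatrix, crossMatrix]

lemma rank_crossMatrix_le (a : Fin 3 → K) : (crossMatrix a).rank ≤ 2 := by
  have hdet : (crossMatrix a).det = 0 := by
    simp only [crossMatrix, det_fin_three, of_apply, cons_val', cons_val_zero, cons_val_one,
      cons_val_fin_one, cons_val]
    ring
  by_contra! h
  obtain ⟨E, F, hEF⟩ := le_rank_iff_exists_det_ne_zero.1 h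
  rw [det_mul, det_mul, hdet, mul_zero, zero_mul] at hEF
  exact hEF rfl

lemma rank_koszulMatrix_mul_le [Fintype β] (a : Fin 3 → K) (v : α → K) (w : β → K) :
    (koszulMatrix fun c i j => a c * (v i * w j)).rank ≤ 2 := by
  let U : Matrix (Fin 3 × α) (Fin 3) K := of fun x y => (1 : Matrix _ _ K) x.1 y * v x.2
  let W : Matrix (Fin 3) (Fin 3 × β) K := of fun x y => (1 : Matrix _ _ K) x y.1 * w y.2
  have hfactor : (koszulMatrix fun c i j => a c * (v i * w j)) = U * crossMatrix a * W := by
    ext ⟨x, i⟩ ⟨y, j⟩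
    simp only [U, W, koszulMatrix, of_apply, Matrix.mul_apply, one_apply, ite_mul, mul_ite, one_mul,
      mul_zero, zero_mul, Finset.sum_ite_eq, Finset.sum_ite_eq', Finset.mem_univ, if_true]
    fin_cases x <;> fin_cases y <;> simp [crossMatrix] <;> ring
  rw [hfactor]
  exact ((rank_mul_le_left _ _).trans (rank_mul_le_right _ _)).trans (rank_crossMatrix_le a)

lemma rank_koszulMatrix_sum_mul_le [Finite α] [Fintype β] [Fintype ι] (a : ι → Fin 3 → K)
    (v : ι → α → K) (w : ι → β → K) :
    (koszulMatrix fun c i j => ∑ k, a k c * (v k i * w k j)).rank ≤ 2 * Fintype.card ι := by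
  rw [koszulMatrix_sum]
  calc _ ≤ ∑ k, (koszulMatrix fun c i j => a k c * (v k i * w k j)).rank :=
        Finset.le_sum_of_subadditive _ rank_zero.le matrix_rank_add_le _ _
    _ ≤ Finset.univ.card • 2 :=
        Finset.sum_le_card_nsmul _ _ _ fun k _ => rank_koszulMatrix_mul_le (a k) (v k) (w k)
    _ = 2 * Fintype.card ι := mul_comm _ _

lemma rank_koszulMatrix_le_of_mem_closure_cpSet {n r : ℕ} {T : Tensor 3 n}
    (hT : T ∈ closure (cpSet 3 n r)) (σ : Fin 3 → Fin n) :
    (koszulMatrix fun c i j => T ![σ c, i, j]).rank ≤ 2 * r := by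
  have hclosed : IsClosed
      {T : Tensor 3 n | (koszulMatrix fun c i j => T ![σ c, i, j]).rank ≤ 2 * r} :=
    (isClosed_setOf_rank_le (2 * r)).preimage (continuous_koszulMatrix.comp (by fun_prop))
  refine closure_minimal ?_ hclosed hT
  rintro T ⟨u, hu⟩
  simpa [hu, Fin.prod_univ_three, mul_assoc] using
    rank_koszulMatrix_sum_mul_le (fun k c => u k 0 (σ c)) (fun k => u k 1) (fun k => u k 2)

end Koszul

section Moments

open Matrix
open scoped Kronecker

variable {A K : Type*} [CommRing A] [Field K] {R n p q : ℕ}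

/-- A matrix whose columns form a basis of the orthogonal complement of `(1, x, y)`. -/
def orthMatrix (x y : A) : Matrix (Fin 3) (Fin 2) A :=
  !![x, y; -1, 0; 0, -1]

/-- The matrix whose columns are the vectors `u ⊗ (1, t k, …, t k ^ (n - 1))`, with `u` running
through the chosen basis of the orthogonal complement of `(1, t k ^ p, t k ^ q)`. -/
def momentMatrix (n p q : ℕ) (t : Fin R → A) : Matrix (Fin 3 × Fin n) (Fin R × Fin 2) A :=
  of fun x k => orthMatrix (t k.1 ^ p) (t k.1 ^ q) x.1 k.2 * t k.1 ^ (x.2 : ℕ)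

lemma crossMatrix_eq_orthMatrix_mul (x y : A) :
    crossMatrix ![1, x, y]
      = orthMatrix x y * (!![0, 1; -1, 0] : Matrix _ _ A) * (orthMatrix x y)ᵀ := by
  ext i j
  fin_cases i <;> fin_cases j <;>
    simp [crossMatrix, orthMatrix, Matrix.mul_apply, Fin.sum_univ_two, mul_comm]

lemma koszulMatrix_sum_pow (n p q : ℕ) (t : Fin R → A) :
    (koszulMatrix fun c (i j : Fin n) => ∑ k, t k ^ (![0, p, q] c + i + j : ℕ))
      = momentMatrix n p q t * ((1 : Matrix (Fin R) (Fin R) A) ⊗ₖ !![0, 1; -1, 0])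
        * (momentMatrix n p q t)ᵀ := by
  have hslice (k : Fin R) :
      (koszulMatrix fun c (i j : Fin n) => t k ^ (![0, p, q] c + i + j : ℕ))
        = of fun x y => crossMatrix ![1, t k ^ p, t k ^ q] x.1 y.1
            * (t k ^ (x.2 : ℕ) * t k ^ (y.2 : ℕ)) := by
    ext ⟨x, i⟩ ⟨y, j⟩
    fin_cases x <;> fin_cases y <;> simp [koszulMatrix, crossMatrix, pow_add, mul_assoc]
  simp only [koszulMatrix_sum, hslice, crossMatrix_eq_orthMatrix_mul]
  ext x y
  simp only [momentMatrix, Matrix.sum_apply, Matrix.mul_apply, of_apply, transpose_apply,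
    kroneckerMap_apply, one_apply, Fintype.sum_prod_type, Fin.sum_univ_two, cons_val',
    cons_val_zero, cons_val_one, cons_val_fin_one, ite_mul, mul_ite, one_mul, zero_mul, mul_zero,
    Finset.sum_ite_irrel, Finset.sum_const_zero, Finset.sum_ite_eq', Finset.mem_univ, if_true]
  exact Finset.sum_congr rfl fun k _ => by ring

lemma eq_zero_of_sum_mul_pow_eq_zero [IsDomain A] {t : Fin R → A} (ht : Function.Injective t)
    (hq : q ≤ n) (hp : R ≤ n + p) (hpq : R + p ≤ n + q) {z w : Fin R → A}
    (hz : ∀ j < n, ∑ k, z k * t k ^ j = 0) (hw : ∀ j < n, ∑ k, w k * t k ^ j = 0)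
    (hzw : ∀ j < n, ∑ k, z k * t k ^ (p + j) + ∑ k, w k * t k ^ (q + j) = 0) : z = 0 ∧ w = 0 := by
  have hw0 : w = 0 := by
    refine eq_zero_of_forall_pow_sum_mul_pow_eq_zero ht fun i => ?_
    rcases lt_or_ge (i : ℕ) n with hi | hi
    · exact hw i hi
    · have h := hzw (i - q) (by omega)
      rwa [hz _ (by omega), zero_add, Nat.add_sub_cancel' (hq.trans hi)] at h
  refine ⟨eq_zero_of_forall_pow_sum_mul_pow_eq_zero ht fun i => ?_, hw0⟩
  rcases lt_or_ge (i : ℕ) n with hi | hi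
  · exact hz i hi
  · have h := hzw (i - p) (by omega)
    simpa [hw0, Nat.add_sub_cancel' (show p ≤ i by omega)] using h

lemma momentMatrix_mulVec_injective [IsDomain A] {t : Fin R → A} (ht : Function.Injective t)
    (hq : q ≤ n) (hp : R ≤ n + p) (hpq : R + p ≤ n + q) :
    Function.Injective (momentMatrix n p q t).mulVec := by
  rw [← coe_mulVecLin, injective_iff_map_eq_zero]
  intro z hz
  have hrow (a : Fin 3) (j : Fin n) :
      ∑ k, ∑ l, orthMatrix (t k ^ p) (t k ^ q) a l * t k ^ (j : ℕ) * z (k, l) = 0 := by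
    rw [← Fintype.sum_prod_type']
    exact congrFun hz (a, j)
  simp only [Fin.sum_univ_two] at hrow
  obtain ⟨h0, h1⟩ := eq_zero_of_sum_mul_pow_eq_zero ht hq hp hpq
    (z := fun k => z (k, 0)) (w := fun k => z (k, 1))
    (fun j hj => by simpa [orthMatrix, mul_comm] using hrow 1 ⟨j, hj⟩)
    (fun j hj => by simpa [orthMatrix, mul_comm] using hrow 2 ⟨j, hj⟩)
    (fun j hj => by
      rw [← hrow 0 ⟨j, hj⟩, ← Finset.sum_add_distrib]
      refine Finset.sum_congr rfl fun k _ => ?_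
      simp only [orthMatrix, of_apply, cons_val', cons_val_zero, cons_val_one, cons_val_fin_one,
        pow_add]
      ring)
  ext ⟨k, l⟩
  fin_cases l
  exacts [congrFun h0 k, congrFun h1 k]

lemma le_rank_koszulMatrix_sum_pow {t : Fin R → K} (ht : Function.Injective t) (hq : q ≤ n)
    (hp : R ≤ n + p) (hpq : R + p ≤ n + q) :
    2 * R ≤ (koszulMatrix fun c (i j : Fin n) => ∑ k, t k ^ (![0, p, q] c + i + j : ℕ)).rank := by
  let J : Matrix (Fin R × Fin 2) (Fin R × Fin 2) K := 1 ⊗ₖ !![0, 1; -1, 0]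
  have hJ : J.det ≠ 0 := by
    rw [show J.det = _ from det_kronecker _ _]
    simp [det_fin_two]
  calc 2 * R = J.rank := by simp [rank_of_det_ne_zero hJ, mul_comm]
    _ ≤ _ := by
      rw [koszulMatrix_sum_pow]
      exact rank_le_rank_mul_mul_transpose (momentMatrix_mulVec_injective ht hq hp hpq) J

lemma isGeneric_le_rank_koszulMatrix [CharZero K] (hq : q ≤ n)
    (hp : R ≤ n + p) (hpq : R + p ≤ n + q) :
    IsGeneric fun s : ℕ → K =>
      2 * R ≤ (koszulMatrix fun c (i j : Fin n) => s (![0, p, q] c + i + j)).rank := by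
  have hmap (s : ℕ → K) :
      (koszulMatrix fun c (i j : Fin n) => X (![0, p, q] c + i + j)).map (eval s)
        = koszulMatrix fun c (i j : Fin n) => s (![0, p, q] c + i + j) := by
    simp only [map_koszulMatrix, eval_X]
  have ht : Function.Injective fun k : Fin R => ((k : ℕ) : K) :=
    Nat.cast_injective.comp Fin.val_injective
  have h := le_rank_koszulMatrix_sum_pow ht hq hp hpq
  simp only [← hmap]
  refine isGeneric_le_rank_map (x₀ := fun i => ∑ k : Fin R, ((k : ℕ) : K) ^ i) ?_
  rwa [hmap]

end Moments

/-! ### Comparison of the ranks -/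

lemma vandSet_subset_symSet (m n r : ℕ) : vandSet m n r ⊆ symSet m n r :=
  fun _ ⟨ab, h⟩ => ⟨fun k => vand n (ab k).1 (ab k).2, h⟩

lemma symSet_subset_cpSet (m n r : ℕ) : symSet m n r ⊆ cpSet m n r :=
  fun _ ⟨v, h⟩ => ⟨fun k _ => v k, h⟩

lemma ranks_eq_of_mem_vandSet {m n R : ℕ} {T : Tensor m n} (hT : T ∈ vandSet m n R)
    (hlow : ∀ r < R, T ∉ closure (cpSet m n r)) :
    brank T = R ∧ bSymRank T = R ∧ cpRank T = R ∧ symRank T = R ∧ vandRank T = R := by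
  have sInf_eq (S : ℕ → Set (Tensor m n)) (hR : T ∈ S R) (hS : ∀ r, S r ⊆ closure (cpSet m n r)) :
      sInf {r | T ∈ S r} = R :=
    le_antisymm (Nat.sInf_le hR) (le_csInf ⟨R, hR⟩ fun r hr => by
      by_contra hlt
      exact hlow r (not_le.1 hlt) (hS r hr))
  have hsym := vandSet_subset_symSet m n R hT
  have hcp := symSet_subset_cpSet m n R hsym
  refine ⟨sInf_eq _ (subset_closure hcp) fun r => subset_rfl,
    sInf_eq _ (subset_closure hsym) fun r => closure_mono (symSet_subset_cpSet m n r),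
    sInf_eq _ hcp fun r => subset_closure,
    sInf_eq _ hsym fun r => (symSet_subset_cpSet m n r).trans subset_closure,
    sInf_eq _ hT fun r => ((vandSet_subset_symSet m n r).trans (symSet_subset_cpSet m n r)).trans
      subset_closure⟩

lemma mem_vandSet_of_sum_mul_pow {m n R : ℕ} (hd : (n - 1) * m ≠ 0) {T : Tensor m n}
    {c t : Fin R → ℂ} (hT : ∀ i, T i = ∑ k, c k * t k ^ ∑ j, (i j : ℕ)) :
    T ∈ vandSet m n R := by
  choose a ha using fun k => IsAlgClosed.exists_pow_nat_eq (c k) (Nat.pos_of_ne_zero hd)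
  refine ⟨fun k => (a k, a k * t k), fun i => ?_⟩
  rw [hT]
  refine Finset.sum_congr rfl fun k _ => ?_
  have hv (j : Fin m) : vand n (a k) (a k * t k) (i j) = a k ^ (n - 1) * t k ^ (i j : ℕ) := by
    rw [vand, mul_pow, ← mul_assoc, ← pow_add, Nat.sub_add_cancel (Nat.le_sub_one_of_lt (i j).isLt)]
  simp only [hv]
  rw [Finset.prod_mul_distrib, Finset.prod_const, Finset.prod_pow_eq_pow_sum, Finset.card_univ,
    Fintype.card_fin, ← pow_mul, ha]

/-- For a generic Hankel tensor of order 3 and dimension `n`, all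
ranks equal `⌊(3n-1)/2⌋`. -/
theorem stmt_16 (n : ℕ) (hn : 2 ≤ n) :
    ∃ P : MvPolynomial (Fin ((n - 1) * 3 + 1)) ℂ, P ≠ 0 ∧
      ∀ (H : Tensor 3 n) (h : Fin ((n - 1) * 3 + 1) → ℂ), IsHankel H h →
        MvPolynomial.eval h P ≠ 0 →
        brank H = (3 * n - 1) / 2 ∧ bSymRank H = (3 * n - 1) / 2 ∧
        cpRank H = (3 * n - 1) / 2 ∧ symRank H = (3 * n - 1) / 2 ∧
        vandRank H = (3 * n - 1) / 2 := by
  set R := (3 * n - 1) / 2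
  let p := (n - 1) / 2
  obtain ⟨P, hP, hPgen⟩ := ((isGeneric_exists_sum_mul_pow (K := ℂ) R).and
    (isGeneric_le_rank_koszulMatrix (n := n) (R := R) (p := p) (q := n - 1) (by omega)
      (by omega) (by omega))).exists_comp_eq (Fin.valEmbedding (n := (n - 1) * 3 + 1))
  refine ⟨P, hP, fun H h hH hPh => ?_⟩
  obtain ⟨s, rfl, ⟨c, t, hs⟩, hrank⟩ := hPgen h hPh
  have hHs (i : Fin 3 → Fin n) : H i = s (∑ j, (i j : ℕ)) := hH i
  refine ranks_eq_of_mem_vandSet (mem_vandSet_of_sum_mul_pow (c := c) (t := t) (by omega)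
    fun i => ?_) fun r hr hmem => ?_
  · rw [hHs, hs _ (by rw [Fin.sum_univ_three]; omega)]
  · let σ : Fin 3 → Fin n := ![⟨0, by omega⟩, ⟨p, by omega⟩, ⟨n - 1, by omega⟩]
    have hσ (a : Fin 3) (i j : Fin n) : H ![σ a, i, j] = s (![0, p, n - 1] a + i + j) := by
      rw [hHs, Fin.sum_univ_three]
      fin_cases a <;> rfl
    have hle := rank_koszulMatrix_le_of_mem_closure_cpSet hmem σ
    simp only [hσ] at hle
    omega
end
end

section
/- Let m ≥ 2 and let H be the Hankel tensor of order m and dimension 3 whose parameter vector h ∈ ℂ^{2m+1} is given by h_1 = h_{2m} = 1 and h_l = 0 for all l ∉ {1, 2m} (this is the Hankel tensor associated with the form m·x^{m−1}y + z^m). Then rank_V(H) = 2m − 1. -/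
open scoped BigOperators
open MvPolynomial

noncomputable section

/-!
Since `∏ j, v(a,b) (i j) = a ^ (d - l) * b ^ l` with `l = ∑ j, i j` and `d = (n - 1) * m`, and every
`l ≤ d` occurs as such a sum, a decomposition of a Hankel tensor into `r` Vandermonde powers is the
same as an expression of its parameter vector by the power sums `∑ k, a_k ^ (d - l) * b_k ^ l`.

For `e₁ + e_d` fewer than `d - 1` points are impossible, by Sylvester's apolarity argument: let `Q`
be `X` times the product of the factors `X - b_k / a_k` over the nonzero ratios. It has degree less
than `d` and vanishes at every ratio, so pairing its coefficients with the power sums gives zero;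
but this pairing is `Q.coeff 1 ≠ 0`.

Conversely, put `N = d - 1`. If `ζ` is a primitive `N`-th root of unity, then the average of
`ζ ^ (k * (l - 1))` over `k < N` is `1` when `N ∣ l - 1`, that is for `l = 1` and `l = d`, and `0`
otherwise. This average is a power sum of the points with ratios `ζ ^ k`, suitably scaled.
-/

section PowerSum

variable {K ι : Type*} [Field K] [Fintype ι]

/-- The power sum `∑ k, a_k ^ (d - l) * b_k ^ l` of points `(a_k, b_k)`. For `0 ≤ l ≤ d` these are
the entries of the parameter vector of `∑ k, v(a_k, b_k)^⊗m`, where `d = (n - 1) * m`. The exponent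
`d - l` is truncated, so only the values at `l ≤ d` are meaningful. -/
def powerSum (d : ℕ) (p : ι → K × K) (l : ℕ) : K :=
  ∑ k, (p k).1 ^ (d - l) * (p k).2 ^ l

lemma sum_coeff_mul_pow_mul_pow {d : ℕ} {Q : Polynomial K} (hQ : Q.natDegree < d) (a b : K) :
    ∑ l ∈ Finset.range d, Q.coeff l * (a ^ (d - l) * b ^ l) = a ^ d * Q.eval (b / a) := by
  rw [Polynomial.eval_eq_sum_range' hQ, Finset.mul_sum]
  refine Finset.sum_congr rfl fun l hl => ?_
  have hld : l < d := Finset.mem_range.1 hl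
  rcases eq_or_ne a 0 with rfl | ha
  -- For a point at infinity the ratio `b / 0 = 0` is junk, but `l < d` makes both sides vanish.
  · simp [Nat.sub_ne_zero_of_lt hld, Nat.ne_zero_of_lt hld]
  · rw [pow_sub₀ a ha hld.le, div_pow]
    ring

lemma sum_coeff_mul_powerSum {d : ℕ} {Q : Polynomial K} (hQ : Q.natDegree < d) (p : ι → K × K) :
    ∑ l ∈ Finset.range d, Q.coeff l * powerSum d p l =
      ∑ k, (p k).1 ^ d * Q.eval ((p k).2 / (p k).1) := by
  simp only [powerSum, Finset.mul_sum]
  rw [Finset.sum_comm]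
  exact Finset.sum_congr rfl fun k _ => sum_coeff_mul_pow_mul_pow hQ _ _

lemma exists_polynomial_coeff_zero_ne_zero_and_isRoot (x : ι → K) :
    ∃ P : Polynomial K, P.natDegree ≤ Fintype.card ι ∧ P.coeff 0 ≠ 0 ∧
      ∀ k, x k ≠ 0 → P.IsRoot (x k) := by
  classical
  refine ⟨∏ k with x k ≠ 0, (Polynomial.X - Polynomial.C (x k)), ?_, ?_, fun k hk => ?_⟩
  · rw [Polynomial.natDegree_finsetProd_X_sub_C_eq_card]
    exact Finset.card_le_univ _
  · simp [Polynomial.coeff_zero_eq_eval_zero, Polynomial.eval_prod, Finset.prod_ne_zero_iff]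
  · rw [Polynomial.IsRoot, Polynomial.eval_prod]
    exact Finset.prod_eq_zero (Finset.mem_filter.2 ⟨Finset.mem_univ k, hk⟩) (by simp)

theorem le_card_add_one_of_powerSum {d : ℕ} {p : ι → K × K} (h_one : powerSum d p 1 ≠ 0)
    (h_zero : ∀ l, 2 ≤ l → l < d → powerSum d p l = 0) : d ≤ Fintype.card ι + 1 := by
  by_contra! hd
  obtain ⟨P, hP_deg, hP_zero, hP_root⟩ :=
    exists_polynomial_coeff_zero_ne_zero_and_isRoot fun k => (p k).2 / (p k).1
  have hQ_deg : (Polynomial.X * P).natDegree < d := by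
    have := Polynomial.natDegree_mul_le (p := Polynomial.X) (q := P)
    rw [Polynomial.natDegree_X] at this
    omega
  have hQ_root : ∀ k, (Polynomial.X * P).eval ((p k).2 / (p k).1) = 0 := fun k => by
    rw [Polynomial.eval_mul, Polynomial.eval_X]
    exact mul_eq_zero.2 (or_iff_not_imp_left.2 (hP_root k))
  have hQ_pairing : ∑ l ∈ Finset.range d, (Polynomial.X * P).coeff l * powerSum d p l =
      P.coeff 0 * powerSum d p 1 := by
    rw [Finset.sum_eq_single_of_mem 1 (Finset.mem_range.2 (by omega)), Polynomial.coeff_X_mul P 0]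
    intro l hl hl_one
    obtain rfl | hl_two : l = 0 ∨ 2 ≤ l := by omega
    · rw [Polynomial.coeff_X_mul_zero, zero_mul]
    · rw [h_zero l hl_two (Finset.mem_range.1 hl), mul_zero]
  refine mul_ne_zero hP_zero h_one ?_
  simp only [← hQ_pairing, sum_coeff_mul_powerSum hQ_deg, hQ_root, mul_zero, Finset.sum_const_zero]

end PowerSum

lemma geom_sum_eq_ite_of_pow_eq_one {R : Type*} [CommRing R] [IsDomain R] [DecidableEq R] {x : R}
    {N : ℕ} (hx : x ^ N = 1) : ∑ k ∈ Finset.range N, x ^ k = if x = 1 then (N : R) else 0 := by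
  split_ifs with h_one
  · simp [h_one]
  · refine (mul_eq_zero.1 ?_).resolve_right (sub_ne_zero.2 h_one)
    rw [geom_sum_mul, hx, sub_self]

lemma natCast_dvd_sub_one_iff {N l : ℕ} (hN : 2 ≤ N) (hl : l ≤ N + 1) :
    (N : ℤ) ∣ l - 1 ↔ l = 1 ∨ l = N + 1 := by
  constructor
  · rintro ⟨c, hc⟩
    have hc_nonneg : 0 ≤ c := by
      by_contra! hc_neg
      nlinarith
    have hc_le : c ≤ 1 := by
      by_contra! hc_gt
      nlinarith
    interval_cases c <;> omega
  · rintro (rfl | rfl) <;> simp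

theorem exists_powerSum_eq_ite {K : Type*} [Field K] [IsAlgClosed K] {N : ℕ} [NeZero (N : K)]
    (hN : 2 ≤ N) : ∃ p : Fin N → K × K, ∀ l ≤ N + 1,
      powerSum (N + 1) p l = if l = 1 ∨ l = N + 1 then 1 else 0 := by
  classical
  obtain ⟨ζ, hζ⟩ := HasEnoughRootsOfUnity.exists_primitiveRoot K N
  have hζ_ne : ζ ≠ 0 := hζ.ne_zero (by omega)
  choose a ha using fun k : Fin N =>
    IsAlgClosed.exists_pow_nat_eq ((ζ ^ (k : ℕ))⁻¹ / N) N.succ_pos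
  refine ⟨fun k => (a k, ζ ^ (k : ℕ) * a k), fun l hl => ?_⟩
  have h_term (k : Fin N) : a k ^ (N + 1 - l) * (ζ ^ (k : ℕ) * a k) ^ l =
      (ζ ^ ((l : ℤ) - 1)) ^ (k : ℕ) / N := by
    calc a k ^ (N + 1 - l) * (ζ ^ (k : ℕ) * a k) ^ l
        = a k ^ (N + 1 - l + l) * (ζ ^ (k : ℕ)) ^ l := by ring
      _ = (ζ ^ ((l : ℤ) - 1)) ^ (k : ℕ) / N := by
        rw [Nat.sub_add_cancel hl, ha, zpow_sub_one₀ hζ_ne, zpow_natCast]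
        ring
  have h_pow : (ζ ^ ((l : ℤ) - 1)) ^ N = 1 := by
    rw [← zpow_natCast, zpow_comm, zpow_natCast, hζ.pow_eq_one, one_zpow]
  calc ∑ k : Fin N, a k ^ (N + 1 - l) * (ζ ^ (k : ℕ) * a k) ^ l
      = (∑ k ∈ Finset.range N, (ζ ^ ((l : ℤ) - 1)) ^ k) / N := by
        simp only [h_term, ← Finset.sum_div,
          Fin.sum_univ_eq_sum_range fun k => (ζ ^ ((l : ℤ) - 1)) ^ k]
    _ = if l = 1 ∨ l = N + 1 then 1 else 0 := by
        simp only [geom_sum_eq_ite_of_pow_eq_one h_pow, hζ.zpow_eq_one_iff_dvd,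
          natCast_dvd_sub_one_iff hN hl, ite_div, div_self (NeZero.ne (N : K)), zero_div]

section Hankel

variable {m n : ℕ}

lemma prod_vand (a b : ℂ) (i : Fin m → Fin n) :
    ∏ j, vand n a b (i j) = a ^ ((n - 1) * m - ∑ j, (i j : ℕ)) * b ^ ∑ j, (i j : ℕ) := by
  have h_sum : ∑ j, (n - 1 - (i j : ℕ)) = (n - 1) * m - ∑ j, (i j : ℕ) := by
    rw [Finset.sum_tsub_distrib _ fun j _ => Nat.le_sub_one_of_lt (i j).isLt]
    simp [mul_comm]
  simp only [vand, Finset.prod_mul_distrib, Finset.prod_pow_eq_pow_sum, h_sum]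

lemma exists_sum_fin_eq [NeZero n] {l : ℕ} (hl : l ≤ (n - 1) * m) :
    ∃ i : Fin m → Fin n, ∑ j, (i j : ℕ) = l := by
  induction m generalizing l with
  | zero => exact ⟨Fin.elim0, by simp_all⟩
  | succ m ih =>
    have hn : 0 < n := NeZero.pos n
    rw [Nat.mul_succ] at hl
    obtain ⟨i, hi⟩ := ih (l := l - (n - 1)) (by omega)
    refine ⟨Fin.cons ⟨min l (n - 1), by omega⟩ i, ?_⟩
    simp only [Fin.sum_univ_succ, Fin.cons_zero, Fin.cons_succ, hi]
    omega

theorem IsHankel.mem_vandSet_iff [NeZero n] {r : ℕ} {H : Tensor m n}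
    {h : Fin ((n - 1) * m + 1) → ℂ} (hH : IsHankel H h) :
    H ∈ vandSet m n r ↔ ∃ p : Fin r → ℂ × ℂ, ∀ l, h l = powerSum ((n - 1) * m) p l := by
  simp only [vandSet, Set.mem_ofPred_eq, prod_vand]
  refine exists_congr fun p => ⟨fun hp ⟨l, hl⟩ => ?_, fun hp i => (hH i).trans (hp _)⟩
  obtain ⟨i, rfl⟩ := exists_sum_fin_eq (Nat.le_of_lt_succ hl)
  exact (hH i).symm.trans (hp i)

end Hankel

theorem stmt_18_general (m n : ℕ) (hd : 3 ≤ (n - 1) * m) (H : Tensor m n)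
    (hH : IsHankel H fun l => if (l : ℕ) = 1 ∨ (l : ℕ) = (n - 1) * m then 1 else 0) :
    vandRank H = (n - 1) * m - 1 := by
  have : NeZero n := ⟨by rintro rfl; simp at hd⟩
  have : NeZero (((n - 1) * m - 1 : ℕ) : ℂ) := ⟨Nat.cast_ne_zero.2 (by omega)⟩
  have h_upper : H ∈ vandSet m n ((n - 1) * m - 1) := by
    obtain ⟨p, hp⟩ := exists_powerSum_eq_ite (K := ℂ) (N := (n - 1) * m - 1) (by omega)
    rw [Nat.sub_add_cancel (by omega)] at hp
    exact hH.mem_vandSet_iff.2 ⟨p, fun l => (hp l (Nat.le_of_lt_succ l.isLt)).symm⟩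
  refine le_antisymm (Nat.sInf_le h_upper) (le_csInf ⟨_, h_upper⟩ fun r hr => ?_)
  obtain ⟨p, hp⟩ := hH.mem_vandSet_iff.1 hr
  have h_powerSum (l : ℕ) (hl : l < (n - 1) * m) :
      powerSum ((n - 1) * m) p l = if l = 1 then 1 else 0 := by
    simpa [hl.ne] using (hp ⟨l, by omega⟩).symm
  have h_one : powerSum ((n - 1) * m) p 1 ≠ 0 := by simp [h_powerSum 1 (by omega)]
  have h_card := le_card_add_one_of_powerSum h_one fun l hl_two hl => by
    rw [h_powerSum l hl, if_neg (by omega)]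
  rwa [Fintype.card_fin, ← Nat.sub_le_iff_le_add] at h_card

/-- The Hankel tensor of order `m ≥ 2` and dimension 3 associated with
the form `m·x^(m-1)y + z^m` has Vandermonde rank `2m-1`. -/
theorem stmt_18 (m : ℕ) (hm : 2 ≤ m) (H : Tensor m 3)
    (hH : IsHankel H (fun l : Fin ((3 - 1) * m + 1) =>
      if (l : ℕ) = 1 ∨ (l : ℕ) = 2 * m then 1 else 0)) :
    vandRank H = 2 * m - 1 :=
  stmt_18_general m 3 (by omega) H hH
end
end
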